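/- Let e₁, a, e₂ ∈ L with 0_L ≤ e₁ ≤ a ≤ e₂ ≤ 1_L and let f : L → [-∞,+∞] be an injective increasing function with f(e₁) = 0 satisfying conditions (i)–(v). Then 𝕌 is associative: 𝕌(x, 𝕌(y,z)) = 𝕌(𝕌(x,y), z) for all x, y, z ∈ L. -/

import Mathlib

/-!
Since `f` is injective, an element of `L` is determined by its value in `[-∞,+∞]`, so the
associativity identity can be checked after applying `f`. The values split into three zones,
`f x < 0`, `0 ≤ f x ≤ f a` and `f a < f x`, on which the operation `U` has a rigid form.

* On `f x ≤ 0` it is the truncated sum `max (f x + f y) (f ⊥)`: by condition (i), either the sum is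
  in the range of `f`, or it lies below `f ⊥` and then the pseudo-inverse returns `⊥`.
* On `[0, f a]`, restricted to elements comparable with `a`, it is the truncated sum
  `min (f x + f y) (f a)`, which is in the range by (i); condition (v) says that these elements
  are closed under the operation. If one argument is incomparable with `a`, the result is `a`.
* Above `f a` it is the minimum if both values are at most `f e₂` and the maximum otherwise.

Each of the three pieces is associative, and they fit together: the strictly negative elements are
absorbing, with every non-negative element acting on them as an identity; among non-negative
elements, `a` is a zero and the product of an element of the middle zone with one of the upper
zone is `a`.
-/

open scoped Classical

/-- `x` and `y` are incomparable elements of a lattice. -/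
def Incomp {L : Type*} [Lattice L] (x y : L) : Prop := ¬ (x ≤ y ∨ y ≤ x)

/-- `s` is a summand of `v` in `A ⊆ [-∞,+∞]`. -/
def IsSummand (A : Set EReal) (s v : EReal) : Prop :=
  s ≠ 0 ∧ v ≠ 0 ∧ s ∈ A ∧ v ∈ A ∧ ∃ b ∈ A, v = s + b ∧ 0 < s * b

/-- The set `F_a = {f x : x ∈ I_a, 0 < f x < f a}`. -/
def Fset {L : Type*} [Lattice L] (f : L → EReal) (a : L) : Set EReal :=
  {t | ∃ x : L, Incomp x a ∧ 0 < f x ∧ f x < f a ∧ f x = t}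

/-- The five-case formula of Theorem 3.1, where `g` plays the role of the
pseudo-inverse `f⁽⁻¹⁾`. -/
noncomputable def U2 {L : Type*} [Lattice L] (f : L → EReal) (g : EReal → L)
    (a e₂ : L) (x y : L) : L :=
  if f x ≤ 0 ∧ f y ≤ 0 then g (f x + f y)
  else if 0 ≤ f x ∧ f x ≤ f a ∧ 0 ≤ f y ∧ f y ≤ f a ∧ ¬ Incomp x a ∧ ¬ Incomp y a then
    g (min (f x + f y) (f a))
  else if (f a < f x ∧ 0 ≤ f y ∧ f y ≤ f a) ∨ (0 ≤ f x ∧ f x ≤ f a ∧ f a < f y)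
      ∨ (0 ≤ f x ∧ f x ≤ f a ∧ f y ∈ Fset f a)
      ∨ (f x ∈ Fset f a ∧ 0 ≤ f y ∧ f y ≤ f a) then a
  else if (f e₂ < f x ∧ f e₂ < f y) ∨ (f e₂ < f x ∧ f a < f y ∧ f y ≤ f e₂)
      ∨ (f a < f x ∧ f x ≤ f e₂ ∧ f e₂ < f y) then g (max (f x) (f y))
  else g (min (f x) (f y))

section

variable {L : Type*} [Lattice L] {f : L → EReal} {g : EReal → L} {a e₂ x y z : L}

lemma U2_comm (f : L → EReal) (g : EReal → L) (a e₂ x y : L) :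
    U2 f g a e₂ x y = U2 f g a e₂ y x := by
  unfold U2
  rw [add_comm (f y), min_comm (f y), max_comm (f y)]
  congr 1
  · exact propext and_comm
  congr 1
  · apply propext; tauto
  congr 1
  · apply propext; tauto
  congr 1
  apply propext; tauto

lemma U2_nonpos (hx : f x ≤ 0) (hy : f y ≤ 0) : U2 f g a e₂ x y = g (f x + f y) := by
  simp [U2, hx, hy]

/-- Non-negative elements act as identities on strictly negative ones. -/
lemma U2_neg_left (hg₁ : ∀ x : L, g (f x) = x) (ha : 0 ≤ f a) (he : 0 ≤ f e₂)
    (hx : f x < 0) (hy : 0 ≤ f y) :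
    U2 f g a e₂ x y = x := by
  rcases hy.eq_or_lt with h | h
  · rw [U2_nonpos hx.le h.ge, ← h, add_zero, hg₁]
  · have hF : f x ∉ Fset f a := by
      rintro ⟨w, -, hw, -, hwx⟩
      exact absurd (hwx ▸ hw) hx.not_gt
    simp [U2, hx.not_ge, h.not_ge, hF, (hx.trans_le ha).not_gt, (hx.trans_le he).not_gt,
      (hx.trans h).le, hg₁]

lemma U2_neg_right (hg₁ : ∀ x : L, g (f x) = x) (ha : 0 ≤ f a) (he : 0 ≤ f e₂)
    (hx : 0 ≤ f x) (hy : f y < 0) :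
    U2 f g a e₂ x y = y := by
  rw [U2_comm, U2_neg_left hg₁ ha he hy hx]

/-- Two elements of the middle zone comparable with `a`. The values `f x = f y = 0` fall under the
first case of the formula, where the truncation at `f a` has no effect. -/
lemma U2_mid (ha : 0 ≤ f a) (hx : 0 ≤ f x) (hxa : f x ≤ f a) (hy : 0 ≤ f y) (hya : f y ≤ f a)
    (cx : ¬ Incomp x a) (cy : ¬ Incomp y a) :
    U2 f g a e₂ x y = g (min (f x + f y) (f a)) := by
  by_cases h : f x ≤ 0 ∧ f y ≤ 0
  · rw [U2_nonpos h.1 h.2, le_antisymm h.1 hx, le_antisymm h.2 hy, add_zero, min_eq_left ha]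
  · rw [U2, if_neg h, if_pos ⟨hx, hxa, hy, hya, cx, cy⟩]

/-- An element of the middle zone incomparable with `a` has its value in `F_a`. -/
lemma mem_Fset (hinj : Function.Injective f) {e₁ : L} (he₁a : e₁ ≤ a) (hfe₁ : f e₁ = 0)
    (hx : 0 ≤ f x) (hxa : f x ≤ f a) (ix : Incomp x a) : f x ∈ Fset f a := by
  refine ⟨x, ix, hx.lt_of_ne ?_, hxa.lt_of_ne ?_, rfl⟩
  · rintro h
    have : e₁ = x := hinj (hfe₁.trans h)
    exact ix (Or.inl (this ▸ he₁a))
  · intro h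
    exact ix (Or.inl (hinj h).le)

lemma U2_mid_incomp (hinj : Function.Injective f) {e₁ : L} (he₁a : e₁ ≤ a) (hfe₁ : f e₁ = 0)
    (hx : 0 ≤ f x) (hxa : f x ≤ f a) (hy : 0 ≤ f y) (hya : f y ≤ f a)
    (h : Incomp x a ∨ Incomp y a) : U2 f g a e₂ x y = a := by
  have key : ∀ u v : L, 0 ≤ f u → f u ≤ f a → 0 ≤ f v → f v ≤ f a → Incomp u a →
      U2 f g a e₂ u v = a := by
    intro u v hu hua hv hva iu
    have hF := mem_Fset hinj he₁a hfe₁ hu hua iu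
    have hpos : ¬ f u ≤ 0 := by
      obtain ⟨w, -, hw, -, hwu⟩ := hF
      exact (hwu ▸ hw).not_ge
    rw [U2, if_neg (fun h => hpos h.1), if_neg (fun h => h.2.2.2.2.1 iu),
      if_pos (Or.inr (Or.inr (Or.inr ⟨hF, hv, hva⟩)))]
  rcases h with h | h
  · exact key x y hx hxa hy hya h
  · rw [U2_comm]; exact key y x hy hya hx hxa h

lemma U2_mid_up (ha : 0 ≤ f a) (hx : 0 ≤ f x) (hxa : f x ≤ f a) (hy : f a < f y) :
    U2 f g a e₂ x y = a := by
  simp [U2, hx, hxa, hy, hy.not_ge, (ha.trans_lt hy).not_ge]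

lemma U2_up_mid (ha : 0 ≤ f a) (hx : f a < f x) (hy : 0 ≤ f y) (hya : f y ≤ f a) :
    U2 f g a e₂ x y = a := by
  rw [U2_comm, U2_mid_up ha hy hya hx]

lemma U2_up (hg₁ : ∀ x : L, g (f x) = x) (ha : 0 ≤ f a) (hx : f a < f x) (hy : f a < f y) :
    f (U2 f g a e₂ x y) =
      if f e₂ < f x ∨ f e₂ < f y then max (f x) (f y) else min (f x) (f y) := by
  have hF : ∀ w, f a < f w → f w ∉ Fset f a := by
    rintro w hw ⟨v, -, -, hv, hvw⟩
    exact absurd (hvw ▸ hv) hw.not_gt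
  have hmax : f (g (max (f x) (f y))) = max (f x) (f y) := by
    rcases max_choice (f x) (f y) with h | h <;> rw [h, hg₁]
  have hmin : f (g (min (f x) (f y))) = min (f x) (f y) := by
    rcases min_choice (f x) (f y) with h | h <;> rw [h, hg₁]
  have hiff : ((f e₂ < f x ∧ f e₂ < f y) ∨ (f e₂ < f x ∧ f a < f y ∧ f y ≤ f e₂)
      ∨ (f a < f x ∧ f x ≤ f e₂ ∧ f e₂ < f y)) ↔ (f e₂ < f x ∨ f e₂ < f y) := by
    rcases le_or_gt (f x) (f e₂) with h1 | h1 <;> rcases le_or_gt (f y) (f e₂) with h2 | h2 <;>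
      simp [h1, h2, hx, hy, h1.not_gt, h2.not_gt]
  rw [U2, if_neg (fun h => (ha.trans_lt hx).not_ge h.1), if_neg (fun h => hx.not_ge h.2.1),
    if_neg]
  · simp only [hiff]
    split_ifs
    · exact hmax
    · exact hmin
  · rintro (h | h | h | h)
    · exact hy.not_ge h.2.2
    · exact hx.not_ge h.2.1
    · exact hx.not_ge h.2.1
    · exact hx.not_ge (h.2.2.trans' (absurd h.1 (hF x hx)))

end

/-- Addition of nonpositive extended reals truncated below at `m` is associative. -/
lemma max_add_assoc {m p q r : EReal} (hp : p ≤ 0) (hr : r ≤ 0) :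
    max (p + max (q + r) m) m = max (max (p + q) m + r) m := by
  have h1 : p + m ≤ m := by simpa using add_le_add_left hp m
  have h2 : m + r ≤ m := by simpa using add_le_add_right hr m
  rw [(show Monotone (p + ·) from fun _ _ h => by dsimp only; gcongr).map_max,
    (show Monotone (· + r) from fun _ _ h => by dsimp only; gcongr).map_max, max_assoc, max_assoc,
    max_eq_right h1, max_eq_right h2, add_assoc]

/-- Addition of nonnegative extended reals truncated above at `m` is associative. -/
lemma min_add_assoc {m p q r : EReal} (hp : 0 ≤ p) (hr : 0 ≤ r) :
    min (p + min (q + r) m) m = min (min (p + q) m + r) m := by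
  have h1 : m ≤ p + m := by simpa using add_le_add_left hp m
  have h2 : m ≤ m + r := by simpa using add_le_add_right hr m
  rw [(show Monotone (p + ·) from fun _ _ h => by dsimp only; gcongr).map_min,
    (show Monotone (· + r) from fun _ _ h => by dsimp only; gcongr).map_min, min_assoc, min_assoc,
    min_eq_right h1, min_eq_right h2, add_assoc]

/-- The operation equal to `min` on values at most `b` and to `max` otherwise is associative. -/
lemma max_min_assoc {α : Type*} [LinearOrder α] (b p q r : α) :
    (if b < p ∨ b < (if b < q ∨ b < r then max q r else min q r) then
        max p (if b < q ∨ b < r then max q r else min q r)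
      else min p (if b < q ∨ b < r then max q r else min q r)) =
    if b < (if b < p ∨ b < q then max p q else min p q) ∨ b < r then
        max (if b < p ∨ b < q then max p q else min p q) r
      else min (if b < p ∨ b < q then max p q else min p q) r := by
  rcases le_or_gt p b with hp | hp <;> rcases le_or_gt q b with hq | hq <;>
    rcases le_or_gt r b with hr | hr <;>
    simp [hp, hq, hr, hp.not_gt, hq.not_gt, hr.not_gt, max_assoc, min_assoc]
  all_goals grind

theorem stmt14 {L : Type*} [Lattice L] [BoundedOrder L]
    (e₁ a e₂ : L) (he₁a : e₁ ≤ a) (hae₂ : a ≤ e₂)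
    (f : L → EReal) (hinj : Function.Injective f) (hmono : Monotone f)
    (hfe₁ : f e₁ = 0)
    -- `g` is the pseudo-inverse `f⁽⁻¹⁾` (with the convention `inf ∅ = 1_L`)
    (g : EReal → L) (hg₁ : ∀ x : L, g (f x) = x)
    (hg₂ : ∀ y : EReal, y ∉ Set.range f → IsGLB {x : L | y < f x} (g y))
    -- condition (i)
    (h1 : ∀ x y : L,
      ((0 ≤ f x ∧ f x ≤ f a ∧ 0 ≤ f y ∧ f y ≤ f a) ∨ (f x ≤ 0 ∧ f y ≤ 0)) →
      min (f x + f y) (f a) ∈ Set.range f ∨ min (f x + f y) (f a) < f ⊥)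
    -- condition (ii)
    (h2 : ∀ x y : L,
      ((0 ≤ f x ∧ f x ≤ f a ∧ 0 ≤ f y ∧ f y ≤ f a) ∨ (f x ≤ 0 ∧ f y ≤ 0)) →
      (∃ z : L, IsSummand (Set.range f) (f z) (f x) ∧ IsSummand (Set.range f) (f z) (f y)) →
      ¬ Incomp x y)
    -- condition (iii)
    (h3 : ∀ x y : L, f x < 0 → 0 < f y → f y ≤ f a → x < e₁ → ¬ Incomp x y)
    -- condition (iv)
    (h4 : ∀ x y : L,
      ((f a ≤ f x ∧ f x < f y) ∨ (f x < 0 ∧ 0 < f a ∧ f a ≤ f y)) → ¬ Incomp x y)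
    -- condition (v)
    (h5 : ∀ x y z : L, 0 < f x → f x < f a → 0 < f y → f y < f a →
      f z = f x + f y → 0 < f x + f y → f x + f y ≤ f a → ¬ Incomp z a) :
    (∀ x y z : L, U2 f g a e₂ x (U2 f g a e₂ y z) = U2 f g a e₂ (U2 f g a e₂ x y) z) := by
  have ha : 0 ≤ f a := hfe₁ ▸ hmono he₁a
  have he : 0 ≤ f e₂ := ha.trans (hmono hae₂)
  have hbot : ∀ w, f ⊥ ≤ f w := fun w => hmono bot_le
  have hm : f ⊥ ≤ 0 := hfe₁ ▸ hbot e₁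
  set u := U2 f g a e₂ with hu
  have hN : ∀ x y, f x ≤ 0 → f y ≤ 0 → f (u x y) = max (f x + f y) (f ⊥) := by
    intro x y hx hy
    have hs : f x + f y ≤ 0 := by simpa using add_le_add hx hy
    have hi := h1 x y (Or.inr ⟨hx, hy⟩)
    rw [min_eq_left (hs.trans ha)] at hi
    rw [hu, U2_nonpos hx hy]
    by_cases hr : f x + f y ∈ Set.range f
    · obtain ⟨w, hw⟩ := hr
      rw [← hw, hg₁, max_eq_left (hbot w)]
    · have hlt := hi.resolve_left hr
      -- below `f ⊥` the pseudo-inverse is the infimum of the whole lattice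
      have : g (f x + f y) = ⊥ := le_bot_iff.1 ((hg₂ _ hr).1 hlt)
      rw [this, max_eq_right hlt.le]
  have hNneg : ∀ x y, f x < 0 → f y < 0 → f (u x y) < 0 := by
    intro x y hx hy
    rw [hN x y hx.le hy.le]
    refine max_lt ?_ ((hbot x).trans_lt hx)
    calc f x + f y ≤ f x + 0 := by gcongr
      _ < 0 := by simpa using hx
  have hBval : ∀ x y, 0 ≤ f x → f x ≤ f a → 0 ≤ f y → f y ≤ f a → ¬ Incomp x a → ¬ Incomp y a →
      f (u x y) = min (f x + f y) (f a) := by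
    intro x y hx hxa hy hya cx cy
    have hs : 0 ≤ min (f x + f y) (f a) := le_min (add_nonneg hx hy) ha
    rw [hu, U2_mid ha hx hxa hy hya cx cy]
    obtain ⟨w, hw⟩ := (h1 x y (Or.inl ⟨hx, hxa, hy, hya⟩)).resolve_right (hm.trans hs).not_gt
    rw [← hw, hg₁]
  have hBF : ∀ x y, 0 ≤ f x → f x ≤ f a → 0 ≤ f y → f y ≤ f a → Incomp x a ∨ Incomp y a →
      u x y = a := fun x y hx hxa hy hya h => U2_mid_incomp hinj he₁a hfe₁ hx hxa hy hya h
  have hca : ¬ Incomp a a := fun h => h (Or.inl le_rfl)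
  have hBB : ∀ x y, 0 ≤ f x → f x ≤ f a → 0 ≤ f y → f y ≤ f a →
      0 ≤ f (u x y) ∧ f (u x y) ≤ f a ∧ ¬ Incomp (u x y) a := by
    intro x y hx hxa hy hya
    by_cases hc : Incomp x a ∨ Incomp y a
    · rw [hBF x y hx hxa hy hya hc]; exact ⟨ha, le_rfl, hca⟩
    push Not at hc
    have hv := hBval x y hx hxa hy hya hc.1 hc.2
    refine ⟨hv ▸ le_min (add_nonneg hx hy) ha, hv ▸ min_le_right _ _, ?_⟩
    rcases le_total (f a) (f x + f y) with hs | hs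
    · rw [min_eq_right hs] at hv; rw [hinj hv]; exact hca
    rw [min_eq_left hs] at hv
    rcases hx.eq_or_lt with h0 | hx0
    · rw [← h0, zero_add] at hv; rw [hinj hv]; exact hc.2
    rcases hy.eq_or_lt with h0 | hy0
    · rw [← h0, add_zero] at hv; rw [hinj hv]; exact hc.1
    -- if one value equals `f a`, the sum is already at least `f a`
    rcases hxa.eq_or_lt with h | hxa'
    · have : f (u x y) = f a :=
        hv.trans (le_antisymm hs (by simpa [h] using add_le_add_right hy (f x)))
      rw [hinj this]; exact hca
    rcases hya.eq_or_lt with h | hya'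
    · have : f (u x y) = f a :=
        hv.trans (le_antisymm hs (by simpa [h] using add_le_add_left hx (f y)))
      rw [hinj this]; exact hca
    exact h5 x y _ hx0 hxa' hy0 hya' hv (hx0.trans_le (by simpa using add_le_add_right hy (f x))) hs
  have hza : ∀ x, 0 ≤ f x → u x a = a := by
    intro x hx
    rcases le_or_gt (f x) (f a) with hxa | hxa
    · by_cases hc : Incomp x a
      · exact hBF x a hx hxa ha le_rfl (Or.inl hc)
      · apply hinj
        rw [hBval x a hx hxa ha le_rfl hc hca]
        exact min_eq_right (by simpa using add_le_add_left hx (f a))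
    · exact U2_up_mid ha hxa ha le_rfl
  have haz : ∀ x, 0 ≤ f x → u a x = a := fun x hx => by
    rw [hu, U2_comm, ← hu, hza x hx]
  have hUval : ∀ x y, f a < f x → f a < f y → f (u x y) =
      if f e₂ < f x ∨ f e₂ < f y then max (f x) (f y) else min (f x) (f y) :=
    fun x y hx hy => U2_up hg₁ ha hx hy
  have hUU : ∀ x y, f a < f x → f a < f y → f a < f (u x y) := by
    intro x y hx hy
    rw [hUval x y hx hy]
    split_ifs
    · exact lt_max_of_lt_left hx
    · exact lt_min hx hy
  have hBU : ∀ x y, 0 ≤ f x → f x ≤ f a → f a < f y → u x y = a :=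
    fun x y hx hxa hy => U2_mid_up ha hx hxa hy
  have hUB : ∀ x y, f a < f x → 0 ≤ f y → f y ≤ f a → u x y = a :=
    fun x y hx hy hya => U2_up_mid ha hx hy hya
  have hPP : ∀ x y, 0 ≤ f x → 0 ≤ f y → 0 ≤ f (u x y) := by
    intro x y hx hy
    rcases le_or_gt (f x) (f a) with hxa | hxa <;> rcases le_or_gt (f y) (f a) with hya | hya
    · exact (hBB x y hx hxa hy hya).1
    · rw [hBU x y hx hxa hya]; exact ha
    · rw [hUB x y hxa hy hya]; exact ha
    · exact ha.trans (hUU x y hxa hya).le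
  have hNP : ∀ x y, f x < 0 → 0 ≤ f y → u x y = x := fun x y => U2_neg_left hg₁ ha he
  have hPN : ∀ x y, 0 ≤ f x → f y < 0 → u x y = y := fun x y => U2_neg_right hg₁ ha he
  intro x y z
  rcases lt_or_ge (f x) 0 with hx | hx <;> rcases lt_or_ge (f y) 0 with hy | hy <;>
    rcases lt_or_ge (f z) 0 with hz | hz
  · apply hinj
    rw [hN _ _ hx.le (hNneg y z hy hz).le, hN _ _ (hNneg x y hx hy).le hz.le,
      hN _ _ hx.le hy.le, hN _ _ hy.le hz.le, max_add_assoc hx.le hz.le]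
  · rw [hNP y z hy hz, hNP _ z (hNneg x y hx hy) hz]
  · rw [hPN y z hy hz, hNP x y hx hy]
  · rw [hNP x y hx hy, hNP x z hx hz, hNP x _ hx (hPP y z hy hz)]
  · rw [hPN x y hx hy, hPN x _ hx (hNneg y z hy hz)]
  · rw [hNP y z hy hz, hPN x y hx hy, hNP y z hy hz]
  · rw [hPN y z hy hz, hPN x z hx hz, hPN _ z (hPP x y hx hy) hz]
  rcases le_or_gt (f x) (f a) with hxa | hxa <;> rcases le_or_gt (f y) (f a) with hya | hya <;>
    rcases le_or_gt (f z) (f a) with hza' | hza'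
  · obtain ⟨p1, p2, p3⟩ := hBB x y hx hxa hy hya
    obtain ⟨q1, q2, q3⟩ := hBB y z hy hya hz hza'
    by_cases cx : Incomp x a
    · rw [hBF x y hx hxa hy hya (Or.inl cx), hBF x _ hx hxa q1 q2 (Or.inl cx), haz z hz]
    by_cases cz : Incomp z a
    · rw [hBF y z hy hya hz hza' (Or.inr cz), hBF _ z p1 p2 hz hza' (Or.inr cz), hza x hx]
    by_cases cy : Incomp y a
    · rw [hBF x y hx hxa hy hya (Or.inr cy), hBF y z hy hya hz hza' (Or.inl cy), hza x hx,
        haz z hz]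
    apply hinj
    rw [hBval _ _ hx hxa q1 q2 cx q3, hBval _ _ p1 p2 hz hza' p3 cz,
      hBval _ _ hx hxa hy hya cx cy, hBval _ _ hy hya hz hza' cy cz, min_add_assoc hx hz]
  · obtain ⟨p1, p2, -⟩ := hBB x y hx hxa hy hya
    rw [hBU y z hy hya hza', hza x hx, hBU _ z p1 p2 hza']
  · rw [hUB y z hya hz hza', hBU x y hx hxa hya, hza x hx, haz z hz]
  · rw [hBU x y hx hxa hya, haz z hz, hBU x _ hx hxa (hUU y z hya hza')]
  · obtain ⟨q1, q2, -⟩ := hBB y z hy hya hz hza'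
    rw [hUB x y hxa hy hya, haz z hz, hUB x _ hxa q1 q2]
  · rw [hBU y z hy hya hza', hUB x y hxa hy hya, hza x hx, haz z hz]
  · rw [hUB y z hya hz hza', hza x hx, hUB _ z (hUU x y hxa hya) hz hza']
  · apply hinj
    rw [hUval _ _ hxa (hUU y z hya hza'), hUval _ _ (hUU x y hxa hya) hza',
      hUval _ _ hxa hya, hUval _ _ hya hza']
    exact max_min_assoc _ _ _ _
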